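/- arXiv:2105.03924 — 2 statements merged into one kernel-verified Lean document; each statement's English description precedes it below -/
import Mathlib

section
/- Let I be a nonempty finite set of trains and N a finite set of nodes with capacity function c : N → ℕ, let a, b : I → N be placements that are both safe, and let i₀ ∈ I be an arbitrary train. Then there exists a bijection σ : Fin |I| → I with σ 0 = i₀ such that for every step k < |I|, writing S_k = {σ m : m < k} and x_{S_k} for the intermediate placement of a, b and S_k, for every node n the number of trains j with j ≠ σ k and x_{S_k} j = n is strictly less than c n. (The first train to be moved may be chosen arbitrarily.) -/
/-- A placement `x : I → N` is *safe* if every node has a strictly free slot. -/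
def SafePlacement {I N : Type*} [Fintype I] [DecidableEq N]
    (c : N → ℕ) (x : I → N) : Prop :=
  ∀ n : N, (Finset.univ.filter (fun i : I => x i = n)).card < c n

section Helpers
variable {I N : Type*} [Fintype I] [DecidableEq I] [DecidableEq N]

/-- Moving `j` from the state indexed by `S` is allowed. -/
def GoodMove (c : N → ℕ) (a b : I → N) (S : Finset I) (j : I) : Prop :=
  ∀ n : N, (Finset.univ.filter (fun i : I =>
    i ≠ j ∧ (if i ∈ S then b i else a i) = n)).card < c n

/-- At most one node is full, none overfull. -/
def AlmostSafe (c : N → ℕ) (a b : I → N) (S : Finset I) : Prop :=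
  ∃ n₀ : N, ∀ n : N, (Finset.univ.filter (fun i : I =>
    (if i ∈ S then b i else a i) = n)).card < c n + (if n = n₀ then 1 else 0)

lemma goodMove_of_safe {c : N → ℕ} {a b : I → N} {S : Finset I}
    (h : ∀ n : N, (Finset.univ.filter (fun i : I =>
      (if i ∈ S then b i else a i) = n)).card < c n) (j : I) : GoodMove c a b S j := by
  intro n
  refine lt_of_le_of_lt (Finset.card_le_card ?_) (h n)
  intro i hi
  simp only [Finset.mem_filter, Finset.mem_univ, true_and] at hi ⊢
  exact hi.2

lemma almostSafe_insert {c : N → ℕ} {a b : I → N} {S : Finset I} {j : I}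
    (h : GoodMove c a b S j) : AlmostSafe c a b (insert j S) := by
  refine ⟨b j, fun n => ?_⟩
  have hn := h n
  by_cases hb : n = b j
  · rw [if_pos hb]
    have : (Finset.univ.filter (fun i : I =>
        (if i ∈ insert j S then b i else a i) = n)) ⊆ insert j (Finset.univ.filter (fun i : I =>
        i ≠ j ∧ (if i ∈ S then b i else a i) = n)) := by
      intro i hi
      simp only [Finset.mem_filter, Finset.mem_univ, true_and, Finset.mem_insert] at hi ⊢
      by_cases hij : i = j
      · exact Or.inl hij
      · right
        simpa [hij] using hi
    have h1 := Finset.card_le_card this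
    have h2 := Finset.card_insert_le j (Finset.univ.filter (fun i : I =>
        i ≠ j ∧ (if i ∈ S then b i else a i) = n))
    omega
  · rw [if_neg hb, add_zero]
    refine lt_of_le_of_lt (Finset.card_le_card ?_) hn
    intro i hi
    simp only [Finset.mem_filter, Finset.mem_univ, true_and, Finset.mem_insert] at hi ⊢
    by_cases hij : i = j
    · subst hij
      simp only [true_or, if_true] at hi
      exact absurd hi.symm hb
    · simpa [hij] using hi

lemma exists_goodMove {c : N → ℕ} {a b : I → N} (hb : SafePlacement c b) {S : Finset I}
    (h : AlmostSafe c a b S) (hS : ∃ i, i ∉ S) : ∃ j, j ∉ S ∧ GoodMove c a b S j := by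
  obtain ⟨n₀, h⟩ := h
  by_cases hs : ∀ n : N, (Finset.univ.filter (fun i : I =>
      (if i ∈ S then b i else a i) = n)).card < c n
  · obtain ⟨i, hi⟩ := hS
    exact ⟨i, hi, goodMove_of_safe hs i⟩
  · push Not at hs
    obtain ⟨n, hn⟩ := hs
    have hlt := lt_of_lt_of_le (hb n) hn
    obtain ⟨j, hj, hj'⟩ := Finset.exists_mem_notMem_of_card_lt_card hlt
    simp only [Finset.mem_filter, Finset.mem_univ, true_and] at hj hj'
    have hjS : j ∉ S := by
      intro hjS
      rw [if_pos hjS] at hj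
      exact hj' hj
    have hnn : n = n₀ := by
      by_contra hne
      have := h n
      rw [if_neg hne] at this
      omega
    refine ⟨j, hjS, fun m => ?_⟩
    have hm := h m
    by_cases hmn : m = n
    · subst hmn
      rw [if_pos hnn] at hm
      have : (Finset.univ.filter (fun i : I =>
          i ≠ j ∧ (if i ∈ S then b i else a i) = m)) ⊂ (Finset.univ.filter (fun i : I =>
          (if i ∈ S then b i else a i) = m)) := by
        refine Finset.ssubset_iff_of_subset ?_ |>.2 ⟨j, by simpa using hj, by simp⟩
        intro i hi
        simp only [Finset.mem_filter, Finset.mem_univ, true_and] at hi ⊢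
        exact hi.2
      have := Finset.card_lt_card this
      omega
    · rw [if_neg (by rw [← hnn]; exact hmn), add_zero] at hm
      refine lt_of_le_of_lt (Finset.card_le_card ?_) hm
      intro i hi
      simp only [Finset.mem_filter, Finset.mem_univ, true_and] at hi ⊢
      exact hi.2

end Helpers

/-- trains can be moved one at a time from their `a`-positions to
their `b`-positions in some order `σ` whose first train is the arbitrarily
chosen `i₀`, such that at the moment each train moves every node has a free
slot when the moving train itself is not counted. -/
theorem safe_to_safe_enumeration_first_train_arbitrary
    {I N : Type*} [Fintype I] [Nonempty I] [DecidableEq I] [Fintype N] [DecidableEq N]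
    (c : N → ℕ) (a b : I → N)
    (ha : SafePlacement c a) (hb : SafePlacement c b) (i₀ : I) :
    ∃ σ : Fin (Fintype.card I) ≃ I,
      σ ⟨0, Fintype.card_pos⟩ = i₀ ∧
      ∀ k : Fin (Fintype.card I), ∀ n : N,
        (Finset.univ.filter (fun j : I =>
            j ≠ σ k ∧
            (if ∃ m : Fin (Fintype.card I), m < k ∧ σ m = j then b j else a j) = n)).card
          < c n := by
  classical
  have hgood₀ : GoodMove c a b ∅ i₀ := goodMove_of_safe (by simpa [SafePlacement] using ha) i₀
  have hQ₀ : AlmostSafe c a b ∅ := by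
    refine ⟨a i₀, fun n => ?_⟩
    have := ha n
    simp only [Finset.notMem_empty, if_false]
    omega
  have hf : ∀ S : Finset I, ∃ j : I, (S = ∅ → j = i₀) ∧
      (AlmostSafe c a b S → (∃ i, i ∉ S) → j ∉ S ∧ GoodMove c a b S j) := by
    intro S
    by_cases hS : S = ∅
    · subst hS
      exact ⟨i₀, fun _ => rfl, fun _ _ => ⟨by simp, hgood₀⟩⟩
    · by_cases h : AlmostSafe c a b S ∧ ∃ i, i ∉ S
      · obtain ⟨j, hj⟩ := exists_goodMove hb h.1 h.2
        exact ⟨j, fun h => absurd h hS, fun _ _ => hj⟩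
      · exact ⟨i₀, fun _ => rfl, fun h1 h2 => absurd ⟨h1, h2⟩ h⟩
  choose f hf0 hf1 using hf
  let T : ℕ → Finset I := fun k => Nat.rec ∅ (fun _ S => insert (f S) S) k
  have hT0 : T 0 = ∅ := rfl
  have hTs : ∀ k, T (k + 1) = insert (f (T k)) (T k) := fun _ => rfl
  have hmem : ∀ k j, j ∈ T k ↔ ∃ m, m < k ∧ f (T m) = j := by
    intro k
    induction k with
    | zero => intro j; simp [hT0]
    | succ k ih =>
      intro j
      rw [hTs, Finset.mem_insert, ih]
      constructor
      · rintro (h | ⟨m, hm, h⟩)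
        · exact ⟨k, by omega, h.symm⟩
        · exact ⟨m, by omega, h⟩
      · rintro ⟨m, hm, h⟩
        rcases Nat.lt_succ_iff_lt_or_eq.1 hm with h' | h'
        · exact Or.inr ⟨m, h', h⟩
        · subst h'
          exact Or.inl h.symm
  have hex : ∀ k, k < Fintype.card I → (T k).card = k → ∃ i, i ∉ T k := by
    intro k hk hc
    by_contra hne
    have hall : ∀ i, i ∈ T k := fun i => by
      by_contra hi
      exact hne ⟨i, hi⟩
    have : T k = Finset.univ := Finset.eq_univ_iff_forall.2 hall
    rw [this, Finset.card_univ] at hc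
    omega
  have hinv : ∀ k, k ≤ Fintype.card I → (T k).card = k ∧ AlmostSafe c a b (T k) := by
    intro k
    induction k with
    | zero => intro _; exact ⟨by simp [hT0], hQ₀⟩
    | succ k ih =>
      intro hk
      obtain ⟨hc, hQ⟩ := ih (by omega)
      obtain ⟨h1, h2⟩ := hf1 (T k) hQ (hex k (by omega) hc)
      rw [hTs]
      exact ⟨by rw [Finset.card_insert_of_notMem h1, hc], almostSafe_insert h2⟩
  have hstep : ∀ k, k < Fintype.card I → f (T k) ∉ T k ∧ GoodMove c a b (T k) (f (T k)) := by
    intro k hk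
    obtain ⟨hc, hQ⟩ := hinv k hk.le
    exact hf1 (T k) hQ (hex k hk hc)
  let g : Fin (Fintype.card I) → I := fun k => f (T k)
  have hinj : Function.Injective g := by
    intro p q hpq
    rcases lt_trichotomy p q with h | h | h
    · exact absurd ((hmem q _).2 ⟨p, h, hpq⟩) (hstep q q.2).1
    · exact h
    · exact absurd ((hmem p _).2 ⟨q, h, hpq.symm⟩) (hstep p p.2).1
  have hbij : Function.Bijective g :=
    (Fintype.bijective_iff_injective_and_card g).2 ⟨hinj, by simp⟩
  refine ⟨Equiv.ofBijective g hbij, hf0 _ hT0, fun k n => ?_⟩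
  have hk := (hstep k k.2).2 n
  have hiff : ∀ j, (∃ m : Fin (Fintype.card I), m < k ∧ Equiv.ofBijective g hbij m = j) ↔
      j ∈ T k := by
    intro j
    rw [hmem]
    constructor
    · rintro ⟨m, hm, h⟩
      exact ⟨m, hm, h⟩
    · rintro ⟨m, hm, h⟩
      exact ⟨⟨m, hm.trans k.2⟩, hm, h⟩
  refine lt_of_le_of_lt (Finset.card_le_card ?_) hk
  intro j hj
  simp only [Finset.mem_filter, Finset.mem_univ, true_and] at hj ⊢
  refine ⟨hj.1, ?_⟩
  have h2 := hj.2
  rcases Classical.em (j ∈ T k) with hjT | hjT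
  · rw [if_pos ((hiff j).2 hjT)] at h2
    rw [if_pos hjT]
    exact h2
  · rw [if_neg (fun h => hjT ((hiff j).1 h))] at h2
    rw [if_neg hjT]
    exact h2
end

section
/- In the path-constrained railway transition system, suppose k₀, k₁, …, k_m is a sequence of configurations in which each consecutive pair (k_j, k_{j+1}) is a single move and the final configuration k_m is safe. Let s' be any safe configuration that is non-regressive with respect to k_m (i.e., k_m i ≤ s' i for every train i). Then there exists a sequence of configurations from k₀ to s', each consecutive pair of which is a single move, that has k₀, k₁, …, k_m as a prefix. (Time-wise decomposition soundness: any feasible schedule reaching a safe state can be extended, keeping all of its decisions, into a feasible schedule for any longer safe non-regressive horizon.) -/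
/-- A *single move*: one train `i` advances one step along its path, the
destination node having a free slot not counting train `i`. -/
def Move {I N : Type*} [Fintype I] [DecidableEq I] [DecidableEq N]
    (c : N → ℕ) (L : I → ℕ) (p : ∀ i : I, Fin (L i + 1) → N)
    (k k' : ∀ i : I, Fin (L i + 1)) : Prop :=
  ∃ (i : I) (h : (k i : ℕ) < L i),
    k' i = ⟨(k i : ℕ) + 1, Nat.succ_lt_succ h⟩ ∧
    (∀ j : I, j ≠ i → k' j = k j) ∧
    (Finset.univ.filter (fun j : I =>
        j ≠ i ∧ p j (k j) = p i ⟨(k i : ℕ) + 1, Nat.succ_lt_succ h⟩)).card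
      < c (p i ⟨(k i : ℕ) + 1, Nat.succ_lt_succ h⟩)

/-- Reachability: reflexive–transitive closure of the single-move relation. -/
def Reachable {I N : Type*} [Fintype I] [DecidableEq I] [DecidableEq N]
    (c : N → ℕ) (L : I → ℕ) (p : ∀ i : I, Fin (L i + 1) → N)
    (k k' : ∀ i : I, Fin (L i + 1)) : Prop :=
  Relation.ReflTransGen (Move c L p) k k'

/-- A configuration is *safe* if every node has a strictly free slot. -/
def SafeConfig {I N : Type*} [Fintype I] [DecidableEq I] [DecidableEq N]
    (c : N → ℕ) (L : I → ℕ) (p : ∀ i : I, Fin (L i + 1) → N)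
    (k : ∀ i : I, Fin (L i + 1)) : Prop :=
  ∀ n : N, (Finset.univ.filter (fun i : I => p i (k i) = n)).card < c n

/-- Almost safe: removing train `i` leaves a strictly free slot everywhere. -/
def SafeWithout {I N : Type*} [Fintype I] [DecidableEq I] [DecidableEq N]
    (c : N → ℕ) (L : I → ℕ) (p : ∀ i : I, Fin (L i + 1) → N)
    (k : ∀ i : I, Fin (L i + 1)) (i : I) : Prop :=
  ∀ n : N, (Finset.univ.filter (fun j : I => j ≠ i ∧ p j (k j) = n)).card < c n

theorem safeWithout_of_safe {I N : Type*} [Fintype I] [DecidableEq I] [DecidableEq N]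
    (c : N → ℕ) (L : I → ℕ) (p : ∀ i : I, Fin (L i + 1) → N)
    (k : ∀ i : I, Fin (L i + 1)) (h : SafeConfig c L p k) (i : I) :
    SafeWithout c L p k i := by
  intro n
  refine lt_of_le_of_lt (Finset.card_le_card ?_) (h n)
  intro j hj
  simp only [Finset.mem_filter, Finset.mem_univ, true_and] at hj ⊢
  exact hj.2

theorem exists_movable {I N : Type*} [Fintype I] [DecidableEq I] [DecidableEq N]
    (c : N → ℕ) (L : I → ℕ) (p : ∀ i : I, Fin (L i + 1) → N)
    (k s : ∀ i : I, Fin (L i + 1)) (hs : SafeConfig c L p s)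
    (hle : ∀ i, (k i : ℕ) ≤ (s i : ℕ)) (hne : k ≠ s)
    (i : I) (hi : SafeWithout c L p k i) :
    ∃ i', SafeWithout c L p k i' ∧ (k i' : ℕ) < (s i' : ℕ) := by
  by_cases hk : SafeConfig c L p k
  · obtain ⟨j, hj⟩ := Function.ne_iff.mp hne
    exact ⟨j, safeWithout_of_safe c L p k hk j,
      lt_of_le_of_ne (hle j) (fun h => hj (Fin.ext h))⟩
  · unfold SafeConfig at hk
    push Not at hk
    obtain ⟨d, hd⟩ := hk
    have hex : ∃ j, p j (k j) = d ∧ p j (s j) ≠ d := by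
      by_contra hcon
      push Not at hcon
      have h1 := hs d
      have h2 : (Finset.univ.filter (fun i : I => p i (k i) = d)).card ≤
          (Finset.univ.filter (fun i : I => p i (s i) = d)).card := by
        apply Finset.card_le_card
        intro j hj
        simp only [Finset.mem_filter, Finset.mem_univ, true_and] at hj ⊢
        exact hcon j hj
      omega
    obtain ⟨j, hj1, hj2⟩ := hex
    have hcard : ∀ (n : N) (a : I),
        (Finset.univ.filter (fun x : I => x ≠ a ∧ p x (k x) = n)).card
          + (if p a (k a) = n then 1 else 0)
          = (Finset.univ.filter (fun x : I => p x (k x) = n)).card := by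
      intro n a
      have he : Finset.univ.filter (fun x : I => x ≠ a ∧ p x (k x) = n) =
          (Finset.univ.filter (fun x : I => p x (k x) = n)).erase a := by
        ext x; simp
      rw [he]
      split_ifs with h
      · exact Finset.card_erase_add_one (by simp [h])
      · rw [Finset.erase_eq_of_notMem (by simp [h])]; rfl
    have hid : p i (k i) = d := by
      by_contra h
      have h1 := hcard d i
      have h2 := hi d
      rw [if_neg h] at h1
      omega
    refine ⟨j, ?_, lt_of_le_of_ne (hle j) ?_⟩
    · intro n
      have h1 := hcard n i
      have h2 := hcard n j
      have h3 := hi n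
      rw [hid] at h1
      rw [hj1] at h2
      omega
    · intro h
      have h' : k j = s j := Fin.ext h
      exact hj2 (h' ▸ hj1)

theorem reach_aux {I N : Type*} [Fintype I] [DecidableEq I] [DecidableEq N]
    (c : N → ℕ) (L : I → ℕ) (p : ∀ i : I, Fin (L i + 1) → N)
    (s : ∀ i : I, Fin (L i + 1)) (hs : SafeConfig c L p s) (M : ℕ) :
    ∀ k : ∀ i : I, Fin (L i + 1), (∀ i, (k i : ℕ) ≤ (s i : ℕ)) →
      (∑ i, ((s i : ℕ) - (k i : ℕ)) = M) → (∀ _ : I, ∃ i, SafeWithout c L p k i) →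
      Relation.ReflTransGen (Move c L p) k s := by
  induction M using Nat.strong_induction_on with
  | _ M ih =>
    intro k hle hM hQ
    by_cases hne : k = s
    · rw [hne]
    obtain ⟨a, ha⟩ := Function.ne_iff.mp hne
    obtain ⟨b, hb⟩ := hQ a
    obtain ⟨i, hi, hlt⟩ := exists_movable c L p k s hs hle hne b hb
    have hL : (k i : ℕ) < L i := by have := (s i).isLt; omega
    set k' : ∀ i : I, Fin (L i + 1) :=
      Function.update k i ⟨(k i : ℕ) + 1, Nat.succ_lt_succ hL⟩ with hk'
    have hself : k' i = ⟨(k i : ℕ) + 1, Nat.succ_lt_succ hL⟩ := by simp [hk']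
    have hoth : ∀ j, j ≠ i → k' j = k j := by
      intro j hj; simp [hk', hj]
    have hle' : ∀ j, (k' j : ℕ) ≤ (s j : ℕ) := by
      intro j
      by_cases hj : j = i
      · subst hj; rw [hself]; exact hlt
      · rw [hoth j hj]; exact hle j
    refine Relation.ReflTransGen.head (b := k') ⟨i, hL, hself, hoth, hi _⟩ ?_
    refine ih _ ?_ k' hle' rfl ?_
    · rw [← hM]
      apply Finset.sum_lt_sum
      · intro j _
        by_cases hj : j = i
        · subst hj; rw [hself]; simp only []; omega
        · rw [hoth j hj]
      · refine ⟨i, Finset.mem_univ _, ?_⟩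
        rw [hself]; simp only []; omega
    · intro _
      refine ⟨i, fun n => lt_of_le_of_lt (Finset.card_le_card ?_) (hi n)⟩
      intro j hj
      simp only [Finset.mem_filter, Finset.mem_univ, true_and] at hj ⊢
      rw [hoth j hj.1] at hj
      exact hj

/-- time-wise decomposition soundness: any feasible schedule
`ks 0, …, ks m` reaching a safe state can be extended, keeping it as a prefix,
into a feasible schedule ending in any safe non-regressive configuration `s'`. -/
theorem schedule_extension_prefix
    {I N : Type*} [Fintype I] [DecidableEq I] [DecidableEq N]
    (c : N → ℕ) (L : I → ℕ) (p : ∀ i : I, Fin (L i + 1) → N)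
    (m : ℕ) (ks : ℕ → ∀ i : I, Fin (L i + 1))
    (hmoves : ∀ j : ℕ, j < m → Move c L p (ks j) (ks (j + 1)))
    (hsafe : SafeConfig c L p (ks m))
    (s' : ∀ i : I, Fin (L i + 1))
    (hs' : SafeConfig c L p s')
    (hnr : ∀ i : I, ((ks m) i : ℕ) ≤ (s' i : ℕ)) :
    ∃ (m' : ℕ) (ks' : ℕ → ∀ i : I, Fin (L i + 1)),
      m ≤ m' ∧
      (∀ j : ℕ, j ≤ m → ks' j = ks j) ∧
      (∀ j : ℕ, j < m' → Move c L p (ks' j) (ks' (j + 1))) ∧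
      ks' m' = s' := by
  have hr : Relation.ReflTransGen (Move c L p) (ks m) s' :=
    reach_aux c L p s' hs' _ (ks m) hnr rfl
      (fun a => ⟨a, safeWithout_of_safe c L p _ hsafe a⟩)
  clear hs' hnr
  induction hr with
  | refl => exact ⟨m, ks, le_rfl, fun _ _ => rfl, hmoves, rfl⟩
  | @tail x y _ hxy ih =>
    obtain ⟨m', ks', h1, h2, h3, h4⟩ := ih
    refine ⟨m' + 1, fun j => if j ≤ m' then ks' j else y, by omega, ?_, ?_, ?_⟩
    · intro j hj
      simp only [if_pos (show j ≤ m' by omega)]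
      exact h2 j hj
    · intro j hj
      rcases Nat.lt_succ_iff_lt_or_eq.mp hj with h | h
      · simp only [if_pos (show j ≤ m' by omega), if_pos (show j + 1 ≤ m' by omega)]
        exact h3 j h
      · subst h
        simp only [if_pos le_rfl, if_neg (show ¬ j + 1 ≤ j by omega), h4]
        exact hxy
    · simp
end
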